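/- Fix real numbers q̃, t, c with 0 < q̃ < 1 and t ≥ 1. For each i ∈ ℤ let μᵢ be the probability measure on {0,1,2} given by μᵢ(z) = t^{1{z=1}}·q̃^{−(i−c)z}/Zᵢ where Zᵢ = 1 + t·q̃^{−(i−c)} + q̃^{−2(i−c)}, and let μ be the product probability measure ⊗_{i∈ℤ} μᵢ on {0,1,2}^ℤ. Then μ-almost every configuration η satisfies ηᵢ = 0 for all but finitely many i ≤ 0 and ηᵢ = 2 for all but finitely many i ≥ 1, so that N(η) = Σ_{i≥1}(2 − ηᵢ) − Σ_{i≤0} ηᵢ is a well-defined integer almost surely, and μ({η : ηᵢ = 0 for all but finitely many i ≤ 0, ηᵢ = 2 for all but finitely many i ≥ 1, and N(η) is odd}) = (1 − Π_{i∈ℤ}(1 − 2μᵢ(1)))/2, where the infinite product over i ∈ ℤ converges absolutely. -/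

import Mathlib

/-!
For a good configuration, `N(η)` has the parity of the number of sites with `ηᵢ = 1`, because
`N(η) = ∑ (gᵢ - ηᵢ)` for the ground state `g`, which only takes the even values `0` and `2`. The
events `{ηᵢ = 1}` are independent, and the number `K` of independent events `Aᵢ` that occur has
generating function `𝔼 z^K = ∏ (1 - (1 - z) ℙ(Aᵢ))`; at `z = -1` this is `1 - 2 ℙ(K odd)`. Both the
convergence of the product and, by Borel–Cantelli, the almost sure goodness follow from the
summability of `μᵢ(ηᵢ ≠ gᵢ) = O(q ^ |i|)`.
-/

open MeasureTheory
open scoped BigOperators ENNReal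

/-- The normalising factor `Zᵢ = 1 + t·q̃^{−(i−c)} + q̃^{−2(i−c)}`. -/
noncomputable def Zfac (q t c : ℝ) (i : ℤ) : ℝ :=
  1 + t * Real.rpow q (-((i : ℝ) - c)) + Real.rpow q (-2 * ((i : ℝ) - c))

/-- The single-site weight `μᵢ(z) = t^{1{z=1}}·q̃^{−(i−c)·z} / Zᵢ` for `z ∈ {0,1,2}`. -/
noncomputable def siteWeight (q t c : ℝ) (i : ℤ) (z : Fin 3) : ℝ :=
  t ^ (if (z : ℕ) = 1 then 1 else 0) * Real.rpow q (-((i : ℝ) - c) * (z : ℕ)) / Zfac q t c i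

/-- The single-site measure `μᵢ` on `{0,1,2}`, given by the weights `siteWeight`. -/
noncomputable def siteMeasure (q t c : ℝ) (i : ℤ) : Measure (Fin 3) :=
  ∑ z : Fin 3, ENNReal.ofReal (siteWeight q t c i z) • Measure.dirac z

/-- A configuration `η` is good if `ηᵢ = 0` for all but finitely many `i ≤ 0` and `ηᵢ = 2`
for all but finitely many `i ≥ 1`. -/
def GoodCfg (η : ℤ → Fin 3) : Prop :=
  {i : ℤ | i ≤ 0 ∧ η i ≠ 0}.Finite ∧ {i : ℤ | 1 ≤ i ∧ η i ≠ 2}.Finite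

/-- The conserved quantity `N(η) = Σ_{i≥1} (2 − ηᵢ) − Σ_{i≤0} ηᵢ` (a well-defined integer
for good configurations). -/
noncomputable def Ncons (η : ℤ → Fin 3) : ℤ :=
  (∑ᶠ i : ℤ, if 1 ≤ i then 2 - ((η i : ℕ) : ℤ) else 0) -
  (∑ᶠ i : ℤ, if i ≤ 0 then ((η i : ℕ) : ℤ) else 0)

open ProbabilityTheory Filter Topology

section CountOfEvents

variable {Ω ι : Type*}

lemma hasProd_one_sub_one_sub_mul_indicator {R : Type*} [CommRing R] [TopologicalSpace R]
    {S : Set ι} (hS : S.Finite) (z : R) :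
    HasProd (fun i => 1 - (1 - z) * S.indicator 1 i) (z ^ S.ncard) := by
  have hval : ∏ i ∈ hS.toFinset, (1 - (1 - z) * S.indicator 1 i) = z ^ S.ncard := by
    rw [Set.ncard_eq_toFinset_card S hS]
    refine Finset.prod_eq_pow_card fun i hi => ?_
    simp [hS.mem_toFinset.mp hi]
  rw [← hval]
  refine hasProd_prod_of_ne_finset_one fun i hi => ?_
  simp [mt hS.mem_toFinset.mpr hi]

lemma multipliable_one_sub_mul_of_summable {p : ι → ℝ} (hp : Summable p) (a : ℝ) :
    Multipliable fun i => 1 - a * p i := by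
  simpa only [sub_eq_add_neg] using Real.multipliable_one_add_of_summable (hp.mul_left a).neg

variable [MeasurableSpace Ω] {P : Measure Ω} {A : ι → Set Ω}

lemma ae_finite_of_summable_measureReal [Countable ι] [IsFiniteMeasure P]
    (hsum : Summable fun i => P.real (A i)) : ∀ᵐ ω ∂P, {i | ω ∈ A i}.Finite := by
  refine ae_finite_setOfPred_mem ?_
  simpa only [ofReal_measureReal (measure_ne_top P _)] using hsum.tsum_ofReal_ne_top

lemma measurable_ncard_setOf_mem [Countable ι] (hA : ∀ i, MeasurableSet (A i)) :
    Measurable fun ω => {i | ω ∈ A i}.ncard :=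
  measurable_ncard.comp (measurable_set_iff.mpr fun i => measurable_mem.mpr (hA i))

lemma integral_one_sub_mul_indicator [IsProbabilityMeasure P] {B : Set Ω} (hB : MeasurableSet B)
    (a : ℝ) : ∫ ω, (1 - a * B.indicator 1 ω) ∂P = 1 - a * P.real B := by
  have hint : Integrable (B.indicator (1 : Ω → ℝ)) P := (integrable_const 1).indicator hB
  rw [integral_sub (integrable_const _) (hint.const_mul a), integral_const_mul,
    integral_indicator_one hB]
  simp

lemma integral_prod_one_sub_mul_indicator (hA : ∀ i, MeasurableSet (A i)) (hind : iIndepSet A P)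
    (a : ℝ) (s : Finset ι) :
    ∫ ω, ∏ i ∈ s, (1 - a * (A i).indicator 1 ω) ∂P = ∏ i ∈ s, (1 - a * P.real (A i)) := by
  have := hind.isProbabilityMeasure
  have hmeas (i : ι) : Measurable ((A i).indicator (1 : Ω → ℝ)) := measurable_one.indicator (hA i)
  have hindep : iIndepFun (fun (i : s) ω => 1 - a * (A i).indicator (1 : Ω → ℝ) ω) P :=
    (hind.iIndepFun_indicator.precomp Subtype.val_injective).comp (fun _ x => 1 - a * x)
      fun _ => by fun_prop
  simp_rw [← Finset.prod_coe_sort s]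
  rw [hindep.integral_fun_prod_eq_prod_integral fun i => by fun_prop]
  simp_rw [integral_one_sub_mul_indicator (hA _)]

theorem integral_pow_ncard [Countable ι] (hA : ∀ i, MeasurableSet (A i)) (hind : iIndepSet A P)
    (hsum : Summable fun i => P.real (A i)) {z : ℝ} (hz : |z| ≤ 1) :
    ∫ ω, z ^ {i | ω ∈ A i}.ncard ∂P = ∏' i, (1 - (1 - z) * P.real (A i)) := by
  have := hind.isProbabilityMeasure
  have hbound (s : Finset ι) (ω : Ω) : ‖∏ i ∈ s, (1 - (1 - z) * (A i).indicator 1 ω)‖ ≤ 1 := by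
    rw [norm_prod]
    refine Finset.prod_le_one (fun _ _ => norm_nonneg _) fun i _ => ?_
    by_cases hω : ω ∈ A i <;> simp [hω, hz]
  have hlim : Tendsto (fun s : Finset ι => ∫ ω, ∏ i ∈ s, (1 - (1 - z) * (A i).indicator 1 ω) ∂P)
      atTop (𝓝 (∫ ω, z ^ {i | ω ∈ A i}.ncard ∂P)) := by
    refine tendsto_integral_filter_of_dominated_convergence (fun _ => 1)
      (.of_forall fun s => ?_) (.of_forall fun s => .of_forall (hbound s)) (integrable_const _) ?_
    · have hmeas (i : ι) : Measurable ((A i).indicator (1 : Ω → ℝ)) :=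
        measurable_one.indicator (hA i)
      fun_prop
    · filter_upwards [ae_finite_of_summable_measureReal hsum] with ω hω
      exact hasProd_one_sub_one_sub_mul_indicator hω z
  simp_rw [integral_prod_one_sub_mul_indicator hA hind] at hlim
  exact tendsto_nhds_unique hlim (multipliable_one_sub_mul_of_summable hsum (1 - z)).hasProd

lemma measureReal_setOf_odd [IsProbabilityMeasure P] {X : Ω → ℕ} (hX : Measurable X) :
    P.real {ω | Odd (X ω)} = (1 - ∫ ω, (-1) ^ X ω ∂P) / 2 := by
  have hodd : MeasurableSet {ω | Odd (X ω)} := hX (.of_discrete (s := {n | Odd n}))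
  have hsign (ω : Ω) : (-1 : ℝ) ^ X ω = 1 - 2 * {ω | Odd (X ω)}.indicator 1 ω := by
    rcases Nat.even_or_odd (X ω) with h | h
    · simp [h.neg_one_pow, h]
    · norm_num [h.neg_one_pow, h]
  simp_rw [hsign]
  rw [integral_one_sub_mul_indicator hodd]
  ring

theorem measureReal_setOf_odd_ncard [Countable ι] (hA : ∀ i, MeasurableSet (A i))
    (hind : iIndepSet A P) (hsum : Summable fun i => P.real (A i)) :
    P.real {ω | Odd {i | ω ∈ A i}.ncard} = (1 - ∏' i, (1 - 2 * P.real (A i))) / 2 := by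
  have := hind.isProbabilityMeasure
  rw [measureReal_setOf_odd (measurable_ncard_setOf_mem hA),
    integral_pow_ncard hA hind hsum (by simp)]
  norm_num

end CountOfEvents

section ProductMeasure

variable {ι : Type*} {X : ι → Type*} [∀ i, MeasurableSpace (X i)] {ν : ∀ i, Measure (X i)}
  [∀ i, IsProbabilityMeasure (ν i)]

lemma infinitePi_real_eval_mem {i : ι} {B : Set (X i)} (hB : MeasurableSet B) :
    (Measure.infinitePi ν).real {x | x i ∈ B} = (ν i).real B :=
  (measurePreserving_eval_infinitePi ν i).measureReal_preimage hB.nullMeasurableSet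

lemma iIndepSet_eval_mem_infinitePi {B : ∀ i, Set (X i)} (hB : ∀ i, MeasurableSet (B i)) :
    iIndepSet (fun i => {x | x i ∈ B i}) (Measure.infinitePi ν) := by
  refine (iIndepSet_iff_meas_biInter fun i => measurable_pi_apply i (hB i)).mpr fun s => ?_
  have hmarginal (i : ι) : Measure.infinitePi ν {x | x i ∈ B i} = ν i (B i) :=
    (measurePreserving_eval_infinitePi ν i).measure_preimage (hB i).nullMeasurableSet
  have hbox : ⋂ i ∈ s, {x : ∀ i, X i | x i ∈ B i} = Set.pi s B := by
    ext
    simp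
  calc Measure.infinitePi ν (⋂ i ∈ s, {x | x i ∈ B i})
    _ = ∏ i ∈ s, ν i (B i) := by rw [hbox, Measure.infinitePi_pi ν fun i _ => hB i]
    _ = ∏ i ∈ s, Measure.infinitePi ν {x | x i ∈ B i} := by simp_rw [hmarginal]

end ProductMeasure

section Parity

/-- The ground state: the configuration with `0` on the sites `i ≤ 0` and `2` on the sites `i ≥ 1`.
The good configurations are its finite perturbations. -/
def groundState (i : ℤ) : Fin 3 := if i ≤ 0 then 0 else 2

lemma odd_sum_int_iff_odd_card {ι : Type*} (f : ι → ℤ) (s : Finset ι) :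
    Odd (∑ i ∈ s, f i) ↔ Odd (s.filter fun i => Odd (f i)).card := by
  classical
  induction s using Finset.induction_on with
  | empty => simp
  | insert a s ha ih =>
    by_cases h : Odd (f a) <;>
      simp [Finset.sum_insert ha, Finset.filter_insert, ha, h, ih, Int.odd_add, Nat.odd_add_one,
        ← Int.not_odd_iff_even]

lemma odd_finsum_int_iff_odd_ncard {ι : Type*} {f : ι → ℤ} (hf : f.support.Finite) :
    Odd (∑ᶠ i, f i) ↔ Odd {i | Odd (f i)}.ncard := by
  have hodd : {i | Odd (f i)} = ↑(hf.toFinset.filter fun i => Odd (f i)) := by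
    ext i
    have hne : Odd (f i) → f i ≠ 0 := fun h h0 => by simp [h0] at h
    simpa using hne
  rw [finsum_eq_sum f hf, odd_sum_int_iff_odd_card, hodd, Set.ncard_coe_finset]

variable {η : ℤ → Fin 3}

lemma goodCfg_iff_finite : GoodCfg η ↔ {i | η i ≠ groundState i}.Finite := by
  rw [GoodCfg, ← Set.finite_union]
  congr! 1
  ext i
  by_cases hi : i ≤ 0
  · simp [groundState, hi, show ¬1 ≤ i by lia]
  · simp [groundState, hi, show 1 ≤ i by lia]

lemma Ncons_eq_finsum (hη : GoodCfg η) :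
    Ncons η = ∑ᶠ i, (((groundState i : ℕ) : ℤ) - ((η i : ℕ) : ℤ)) := by
  have hfin := goodCfg_iff_finite.mp hη
  rw [Ncons, ← finsum_sub_distrib]
  · refine finsum_congr fun i => ?_
    by_cases hi : i ≤ 0
    · simp [groundState, hi, show ¬1 ≤ i by lia]
    · simp [groundState, hi, show 1 ≤ i by lia]
  · refine hfin.subset fun i hi h => hi ?_
    have hpos (hi : 1 ≤ i) : ¬i ≤ 0 := by lia
    simp +contextual [h, groundState, hpos]
  · refine hfin.subset fun i hi h => hi ?_
    simp +contextual [h, groundState]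

lemma odd_groundState_sub_iff (i : ℤ) (z : Fin 3) :
    Odd (((groundState i : ℕ) : ℤ) - ((z : ℕ) : ℤ)) ↔ z = 1 := by
  unfold groundState
  split_ifs <;> fin_cases z <;> decide

theorem odd_Ncons_iff_odd_ncard (hη : GoodCfg η) :
    Odd (Ncons η) ↔ Odd {i | η i = 1}.ncard := by
  have hsupp : (Function.support fun i => ((groundState i : ℕ) : ℤ) - ((η i : ℕ) : ℤ)).Finite :=
    (goodCfg_iff_finite.mp hη).subset fun i hi h => hi (by simp [h])
  simp_rw [Ncons_eq_finsum hη, odd_finsum_int_iff_odd_ncard hsupp, odd_groundState_sub_iff]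

end Parity

section ProductLaw

variable {ν : ℤ → Measure (Fin 3)} [∀ i, IsProbabilityMeasure (ν i)]

lemma summable_measureReal_one (hν : Summable fun i => (ν i).real {groundState i}ᶜ) :
    Summable fun i => (ν i).real {1} := by
  refine hν.of_nonneg_of_le (fun _ => measureReal_nonneg) fun i => measureReal_mono ?_
  rw [Set.singleton_subset_iff, Set.mem_compl_singleton_iff, groundState]
  split_ifs <;> decide

lemma ae_goodCfg_infinitePi (hν : Summable fun i => (ν i).real {groundState i}ᶜ) :
    ∀ᵐ η ∂Measure.infinitePi ν, GoodCfg η := by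
  simp_rw [goodCfg_iff_finite]
  refine ae_finite_of_summable_measureReal 
    (A := fun i => {η : ℤ → Fin 3 | η i ∈ ({groundState i}ᶜ : Set (Fin 3))}) ?_
  simpa only [infinitePi_real_eval_mem MeasurableSet.of_discrete] using hν

theorem infinitePi_goodCfg_odd_Ncons (hν : Summable fun i => (ν i).real {groundState i}ᶜ) :
    Measure.infinitePi ν {η | GoodCfg η ∧ Odd (Ncons η)} =
      ENNReal.ofReal ((1 - ∏' i, (1 - 2 * (ν i).real {1})) / 2) := by
  let A (i : ℤ) : Set (ℤ → Fin 3) := {η | η i ∈ ({1} : Set (Fin 3))}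
  have hA (i : ℤ) : (Measure.infinitePi ν).real (A i) = (ν i).real {1} :=
    infinitePi_real_eval_mem .of_discrete
  have hcongr : Measure.infinitePi ν {η | GoodCfg η ∧ Odd (Ncons η)} =
      Measure.infinitePi ν {η | Odd {i | η ∈ A i}.ncard} := by
    refine measure_congr ?_
    filter_upwards [ae_goodCfg_infinitePi hν] with η hη
    exact propext ((and_iff_right hη).trans (odd_Ncons_iff_odd_ncard hη))
  rw [hcongr, ← ofReal_measureReal, measureReal_setOf_odd_ncard]
  · simp_rw [hA]
  · exact fun i => measurable_pi_apply i .of_discrete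
  · exact iIndepSet_eval_mem_infinitePi fun _ => .of_discrete
  · simpa only [hA] using summable_measureReal_one hν

end ProductLaw

section SiteMeasure

variable {q t : ℝ}

lemma Zfac_eq (hq0 : 0 < q) (t c : ℝ) (i : ℤ) :
    Zfac q t c i = 1 + t * q ^ (-(i - c)) + (q ^ (-(i - c))) ^ 2 := by
  rw [Zfac, Real.rpow_eq_pow, Real.rpow_eq_pow, ← Real.rpow_mul_natCast hq0.le, Nat.cast_two,
    neg_mul_comm, mul_comm 2 (-_)]

lemma Zfac_pos (hq0 : 0 < q) (ht : 0 ≤ t) (c : ℝ) (i : ℤ) : 0 < Zfac q t c i := by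
  rw [Zfac_eq hq0]
  positivity

lemma siteWeight_nonneg (hq0 : 0 < q) (ht : 0 ≤ t) (c : ℝ) (i : ℤ) (z : Fin 3) :
    0 ≤ siteWeight q t c i z := by
  have hZ := Zfac_pos hq0 ht c i
  rw [siteWeight, Real.rpow_eq_pow]
  positivity

lemma sum_siteWeight (hq0 : 0 < q) (ht : 0 ≤ t) (c : ℝ) (i : ℤ) :
    ∑ z, siteWeight q t c i z = 1 := by
  simp_rw [siteWeight, ← Finset.sum_div]
  have hexp : -2 * ((i : ℝ) - c) = -(i - c) * 2 := by ring
  rw [div_eq_one_iff_eq (Zfac_pos hq0 ht c i).ne', Fin.sum_univ_three, Zfac, hexp]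
  simp

lemma siteMeasure_apply (q t c : ℝ) (i : ℤ) (A : Set (Fin 3)) :
    siteMeasure q t c i A =
      ∑ z, ENNReal.ofReal (siteWeight q t c i z) * A.indicator 1 z := by
  simp [siteMeasure, Measure.dirac_apply' _ (MeasurableSet.of_discrete (s := A))]

lemma isProbabilityMeasure_siteMeasure (hq0 : 0 < q) (ht : 0 ≤ t) (c : ℝ) (i : ℤ) :
    IsProbabilityMeasure (siteMeasure q t c i) := by
  refine ⟨?_⟩
  simp only [siteMeasure_apply, Set.indicator_univ, Pi.one_apply, mul_one]
  rw [← ENNReal.ofReal_sum_of_nonneg fun z _ => siteWeight_nonneg hq0 ht c i z,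
    sum_siteWeight hq0 ht, ENNReal.ofReal_one]

lemma siteMeasure_real_singleton (hq0 : 0 < q) (ht : 0 ≤ t) (c : ℝ) (i : ℤ) (z : Fin 3) :
    (siteMeasure q t c i).real {z} = siteWeight q t c i z := by
  rw [measureReal_def, siteMeasure_apply, Finset.sum_eq_single z (by simp +contextual) (by simp)]
  simp [siteWeight_nonneg hq0 ht]

lemma siteWeight_zero (hq0 : 0 < q) (t c : ℝ) (i : ℤ) :
    siteWeight q t c i 0 = (1 + t * q ^ (-(i - c)) + (q ^ (-(i - c))) ^ 2)⁻¹ := by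
  simp [siteWeight, Zfac_eq hq0]

lemma siteWeight_two (hq0 : 0 < q) (t c : ℝ) (i : ℤ) :
    siteWeight q t c i 2 = (1 + t * q ^ (i - c) + (q ^ (i - c)) ^ 2)⁻¹ := by
  have hsq : q ^ (-(i - c) * 2) = ((q ^ (i - c)) ^ 2)⁻¹ := by
    rw [neg_mul, Real.rpow_neg hq0.le, ← Nat.cast_two, Real.rpow_mul_natCast hq0.le]
  have hnum : siteWeight q t c i 2 = q ^ (-(i - c) * 2) / Zfac q t c i := by simp [siteWeight]
  rw [hnum, hsq, Zfac_eq hq0, Real.rpow_neg hq0.le]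
  field_simp
  ring

lemma one_sub_inv_one_add_mul_add_sq_le {x : ℝ} (ht : 0 ≤ t) (hx : 0 ≤ x) :
    1 - (1 + t * x + x ^ 2)⁻¹ ≤ (t + 1) * x := by
  have hD : 0 < 1 + t * x + x ^ 2 := by positivity
  have hsub : 1 - (1 + t * x + x ^ 2)⁻¹ = (t * x + x ^ 2) / (1 + t * x + x ^ 2) := by
    field_simp
    ring
  rw [hsub, div_le_iff₀ hD]
  have hcubic : 0 ≤ x * ((x - 1 / 2) ^ 2 + 3 / 4) := by positivity
  have hmixed : 0 ≤ t * (t + 1) * x ^ 2 + t * x ^ 3 := by positivity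
  linarith

lemma siteMeasure_real_compl_groundState_le (hq0 : 0 < q) (hq1 : q ≤ 1) (ht : 0 ≤ t) (c : ℝ)
    (i : ℤ) :
    (siteMeasure q t c i).real {groundState i}ᶜ ≤ (t + 1) * q ^ (|(i : ℝ)| - |c|) := by
  have := isProbabilityMeasure_siteMeasure hq0 ht c i
  rw [probReal_compl_eq_one_sub .of_discrete, siteMeasure_real_singleton hq0 ht, groundState]
  split_ifs with hi
  · have hexp : |(i : ℝ)| - |c| ≤ -(i - c) := by
      rw [abs_of_nonpos (Int.cast_nonpos.mpr hi)]
      linarith [neg_abs_le c]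
    rw [siteWeight_zero hq0]
    refine (one_sub_inv_one_add_mul_add_sq_le ht (by positivity)).trans ?_
    refine mul_le_mul_of_nonneg_left ?_ (by positivity)
    exact Real.rpow_le_rpow_of_exponent_ge hq0 hq1 hexp
  · have hexp : |(i : ℝ)| - |c| ≤ i - c := by
      rw [abs_of_pos (Int.cast_pos.mpr (not_le.mp hi))]
      linarith [le_abs_self c]
    rw [siteWeight_two hq0]
    refine (one_sub_inv_one_add_mul_add_sq_le ht (by positivity)).trans ?_
    refine mul_le_mul_of_nonneg_left ?_ (by positivity)
    exact Real.rpow_le_rpow_of_exponent_ge hq0 hq1 hexp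

lemma summable_rpow_abs_int (hq0 : 0 < q) (hq1 : q < 1) :
    Summable fun i : ℤ => q ^ |(i : ℝ)| := by
  have hgeom := summable_geometric_of_lt_one hq0.le hq1
  exact .of_nat_of_neg (by simpa using hgeom) (by simpa using hgeom)

lemma summable_siteMeasure_compl_groundState (hq0 : 0 < q) (hq1 : q < 1) (ht : 0 ≤ t) (c : ℝ) :
    Summable fun i => (siteMeasure q t c i).real {groundState i}ᶜ := by
  refine .of_nonneg_of_le (fun _ => measureReal_nonneg)
    (siteMeasure_real_compl_groundState_le hq0 hq1.le ht c) ?_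
  simp_rw [Real.rpow_sub hq0]
  exact ((summable_rpow_abs_int hq0 hq1).div_const _).mul_left _

end SiteMeasure

theorem statement19_general (q t c : ℝ) (hq0 : 0 < q) (hq1 : q < 1) (ht : 0 ≤ t)
    (μ : Measure (ℤ → Fin 3))
    (hμ : ∀ s : Finset ℤ,
      Measure.map (fun η (i : s) => η (i : ℤ)) μ =
        Measure.pi fun i : s => siteMeasure q t c (i : ℤ)) :
    (∀ᵐ η ∂μ, GoodCfg η) ∧
    Multipliable (fun i : ℤ => 1 - 2 * siteWeight q t c i 1) ∧
    μ {η | GoodCfg η ∧ Odd (Ncons η)} =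
      ENNReal.ofReal ((1 - ∏' i : ℤ, (1 - 2 * siteWeight q t c i 1)) / 2) := by
  have := isProbabilityMeasure_siteMeasure hq0 ht c
  have hoff := summable_siteMeasure_compl_groundState hq0 hq1 ht c
  obtain rfl : μ = Measure.infinitePi (siteMeasure q t c) :=
    IsProjectiveLimit.unique hμ (Measure.isProjectiveLimit_infinitePi _)
  simp_rw [← siteMeasure_real_singleton hq0 ht c]
  exact ⟨ae_goodCfg_infinitePi hoff,
    multipliable_one_sub_mul_of_summable (summable_measureReal_one hoff) 2,
    infinitePi_goodCfg_odd_Ncons hoff⟩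

theorem statement19 (q t c : ℝ) (hq0 : 0 < q) (hq1 : q < 1) (ht : 1 ≤ t)
    (μ : Measure (ℤ → Fin 3)) [IsProbabilityMeasure μ]
    (hμ : ∀ s : Finset ℤ,
      Measure.map (fun η (i : s) => η (i : ℤ)) μ =
        Measure.pi fun i : s => siteMeasure q t c (i : ℤ)) :
    (∀ᵐ η ∂μ, GoodCfg η) ∧
    Multipliable (fun i : ℤ => 1 - 2 * siteWeight q t c i 1) ∧
    μ {η | GoodCfg η ∧ Odd (Ncons η)} =
      ENNReal.ofReal ((1 - ∏' i : ℤ, (1 - 2 * siteWeight q t c i 1)) / 2) := by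
  exact statement19_general q t c hq0 hq1 (zero_le_one.trans ht) μ hμ
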